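/- Suppose D ⊆ ΔΘ is a Borel set, p ∈ I(μ0) has p(D) = 1, and f : ΔΘ → ℝ is bounded and measurable. Suppose every μ̄ ∈ D admits some μ ∈ ΔΘ and γ > 0 with γμ ≤ μ̄ such that ŵ(λμ + (1−λ)μ̄) ≥ f(μ̄) for all sufficiently small λ ∈ (0,1]. Then ŵ(μ0) ≥ ∫ f dp. -/

import Mathlib

open MeasureTheory

/-- The Borel σ-algebra on the space of probability measures (the σ-algebra generated by
evaluation maps, i.e. the subspace σ-algebra of the Giry σ-algebra; for metrizable spaces
this is the Borel σ-algebra of the weak* topology). -/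
instance probMeasurableSpace {Ω : Type*} [MeasurableSpace Ω] :
    MeasurableSpace (ProbabilityMeasure Ω) :=
  MeasurableSpace.comap (fun μ => (μ : Measure Ω)) inferInstance

/-- Sender's expected utility from action `a` at belief `μ`. -/
noncomputable def senderEU {A Θ : Type*} [MeasurableSpace Θ]
    (uS : A → Θ → ℝ) (μ : ProbabilityMeasure Θ) (a : A) : ℝ :=
  ∫ θ, uS a θ ∂(μ : Measure Θ)

/-- The receiver's best responses `A*_R(μ)` at belief `μ`. -/
def bestResponses {A Θ : Type*} [MeasurableSpace Θ]
    (uR : A → Θ → ℝ) (μ : ProbabilityMeasure Θ) : Set A :=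
  {a | ∀ a' : A, ∫ θ, uR a' θ ∂(μ : Measure Θ) ≤ ∫ θ, uR a θ ∂(μ : Measure Θ)}

/-- The sender's upper value function `v`. -/
noncomputable def vFun {A Θ : Type*} [MeasurableSpace Θ]
    (uS uR : A → Θ → ℝ) (μ : ProbabilityMeasure Θ) : ℝ :=
  sSup (senderEU uS μ '' bestResponses uR μ)

/-- The sender's lower value function `w`. -/
noncomputable def wFun {A Θ : Type*} [MeasurableSpace Θ]
    (uS uR : A → Θ → ℝ) (μ : ProbabilityMeasure Θ) : ℝ :=
  sInf (senderEU uS μ '' bestResponses uR μ)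

/-- The set `I(μ0)` of information policies: distributions over posteriors with
barycenter equal to the prior `μ0`. -/
def infoPolicies {Θ : Type*} [MeasurableSpace Θ] (μ0 : ProbabilityMeasure Θ) :
    Set (ProbabilityMeasure (ProbabilityMeasure Θ)) :=
  {p | ∀ B : Set Θ, MeasurableSet B →
    ∫ ν, ((ν : Measure Θ) B).toReal ∂(p : Measure (ProbabilityMeasure Θ))
      = ((μ0 : Measure Θ) B).toReal}

/-- `v̂(μ0)`: the sender's best equilibrium (Bayesian persuasion) value. -/
noncomputable def vHat {A Θ : Type*} [MeasurableSpace Θ]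
    (uS uR : A → Θ → ℝ) (μ0 : ProbabilityMeasure Θ) : ℝ :=
  sSup ((fun p : ProbabilityMeasure (ProbabilityMeasure Θ) =>
    ∫ ν, vFun uS uR ν ∂(p : Measure (ProbabilityMeasure Θ))) '' infoPolicies μ0)

/-- `ŵ(μ0)`: the sender's worst equilibrium value. -/
noncomputable def wHat {A Θ : Type*} [MeasurableSpace Θ]
    (uS uR : A → Θ → ℝ) (μ0 : ProbabilityMeasure Θ) : ℝ :=
  sSup ((fun p : ProbabilityMeasure (ProbabilityMeasure Θ) =>
    ∫ ν, wFun uS uR ν ∂(p : Measure (ProbabilityMeasure Θ))) '' infoPolicies μ0)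

/-- `γμ ≤ mubar`: the measure `μ` scaled by `γ` is setwise below `mubar`. -/
def scaledLE {Θ : Type*} [MeasurableSpace Θ]
    (γ : ℝ) (μ mubar : ProbabilityMeasure Θ) : Prop :=
  ∀ E : Set Θ, MeasurableSet E →
    ENNReal.ofReal γ * (μ : Measure Θ) E ≤ (mubar : Measure Θ) E

/-!
Two facts about `ŵ` give the result. First, `ŵ` satisfies Jensen's inequality
`∫ ŵ dp ≤ ŵ(μ0)` for `p ∈ I(μ0)`. Gluing near-optimal policies at the posteriors would need a
measurable selection; duality avoids it. The lower semicontinuous function `w` is the limit from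
below of continuous functions `g k`, for which the Hahn–Banach and Riesz–Markov–Kakutani theorems
show that the persuasion value of `g k` is the infimum of the continuous affine functions of the
belief above `g k`. Jensen's inequality holds for such infima and passes to the limit.

Second, `f ≤ ŵ` on `D`. If `γμ ≤ μ̄` and `ν = λμ + (1 - λ)μ̄`, then `(1 - λ/γ)ν ≤ μ̄`, so `μ̄` is a
mixture of `ν` and some `ρ` in which `ν` has weight `1 - λ/γ`. As `ŵ` is bounded and concave,
`ŵ(μ̄) ≥ (1 - λ/γ) f(μ̄) - (λ/γ) sup |w|`, and `λ → 0` gives `ŵ(μ̄) ≥ f(μ̄)`.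
-/

open Filter ProbabilityTheory Set TopologicalSpace
open scoped Topology NNReal

/-- The Pasch–Hausdorff envelope of `f` with slope `k`, i.e. the largest `k`-Lipschitz function
below `f`. It serves to approximate a lower semicontinuous function by continuous ones. The
infimum is meaningful only when `f` is bounded below. -/
noncomputable def paschHausdorff {X : Type*} [PseudoMetricSpace X] (f : X → ℝ) (k : ℝ≥0) (x : X) :
    ℝ :=
  ⨅ y, (f y + k * dist x y)

section PaschHausdorff

variable {X : Type*} [PseudoMetricSpace X] {f : X → ℝ} {b : ℝ}

lemma le_add_mul_dist (hf : ∀ x, b ≤ f x) (k : ℝ≥0) (x y : X) : b ≤ f y + k * dist x y :=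
  (hf y).trans (le_add_of_nonneg_right (by positivity))

lemma paschHausdorff_le_add_mul_dist (hf : ∀ x, b ≤ f x) (k : ℝ≥0) (x y : X) :
    paschHausdorff f k x ≤ f y + k * dist x y :=
  ciInf_le ⟨b, forall_mem_range.2 (le_add_mul_dist hf k x)⟩ y

lemma le_paschHausdorff (hf : ∀ x, b ≤ f x) (k : ℝ≥0) (x : X) : b ≤ paschHausdorff f k x :=
  have : Nonempty X := ⟨x⟩
  le_ciInf (le_add_mul_dist hf k x)

lemma paschHausdorff_le (hf : ∀ x, b ≤ f x) (k : ℝ≥0) (x : X) : paschHausdorff f k x ≤ f x := by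
  simpa only [dist_self, mul_zero, add_zero] using paschHausdorff_le_add_mul_dist hf k x x

lemma lipschitzWith_paschHausdorff (hf : ∀ x, b ≤ f x) (k : ℝ≥0) :
    LipschitzWith k (paschHausdorff f k) := by
  refine LipschitzWith.of_le_add_mul k fun x x' => ?_
  have : Nonempty X := ⟨x⟩
  rw [← sub_le_iff_le_add]
  refine le_ciInf fun y => sub_le_iff_le_add.2 ?_
  calc paschHausdorff f k x ≤ f y + k * dist x y := paschHausdorff_le_add_mul_dist hf k x y
    _ ≤ f y + k * (dist x x' + dist x' y) := by gcongr; exact dist_triangle x x' y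
    _ = f y + k * dist x' y + k * dist x x' := by ring

lemma tendsto_paschHausdorff (hf : ∀ x, b ≤ f x) {x : X} (hx : LowerSemicontinuousAt f x) :
    Tendsto (fun k : ℕ => paschHausdorff f k x) atTop (𝓝 (f x)) := by
  have : Nonempty X := ⟨x⟩
  refine tendsto_order.2 ⟨fun c hc => ?_, fun c hc =>
    Eventually.of_forall fun k => (paschHausdorff_le hf k x).trans_lt hc⟩
  obtain ⟨c', hcc', hc'⟩ := exists_between hc
  obtain ⟨δ, hδ, hball⟩ := Metric.eventually_nhds_iff.1 (hx c' hc')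
  obtain ⟨K, hK⟩ := exists_nat_gt ((c' - b) / δ)
  filter_upwards [eventually_ge_atTop K] with k hk
  refine hcc'.trans_le (le_ciInf fun y => ?_)
  rcases lt_or_ge (dist y x) δ with hy | hy
  · exact (hball hy).le.trans (le_add_of_nonneg_right (by positivity))
  · have hKk : (K : ℝ) ≤ k := by exact_mod_cast hk
    calc c' ≤ b + K * δ := by linarith [(div_lt_iff₀ hδ).1 hK]
      _ ≤ f y + k * dist x y := by
        rw [dist_comm x y]
        gcongr
        exact hf y

end PaschHausdorff

lemma exists_continuousMap_tendsto_of_lowerSemicontinuous {X : Type*} [TopologicalSpace X]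
    [PseudoMetrizableSpace X] {f : X → ℝ} (hf : LowerSemicontinuous f) {b : ℝ}
    (hb : ∀ x, b ≤ f x) :
    ∃ g : ℕ → C(X, ℝ), (∀ k x, b ≤ g k x ∧ g k x ≤ f x) ∧
      ∀ x, Tendsto (fun k => g k x) atTop (𝓝 (f x)) := by
  let _ := pseudoMetrizableSpacePseudoMetric X
  exact ⟨fun k => ⟨paschHausdorff f k, (lipschitzWith_paschHausdorff hb k).continuous⟩,
    fun k x => ⟨le_paschHausdorff hb k x, paschHausdorff_le hb k x⟩,
    fun x => tendsto_paschHausdorff hb (hf x)⟩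

/-- The set of global maximizers of `r`. -/
def maximizers {A : Type*} (r : A → ℝ) : Set A :=
  {a | ∀ a', r a' ≤ r a}

section LexicographicOptimization

variable {A X : Type*} [TopologicalSpace A] [TopologicalSpace X]

lemma isClosed_setOf_mem_maximizers {r : X → A → ℝ} (hr : Continuous fun z : A × X => r z.2 z.1) :
    IsClosed {z : A × X | z.1 ∈ maximizers (r z.2)} := by
  change IsClosed {z : A × X | ∀ a', r z.2 a' ≤ r z.2 z.1}
  rw [ofPred_forall]
  exact isClosed_iInter fun a' =>
    isClosed_le (hr.comp (continuous_const.prodMk continuous_snd)) hr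

variable [CompactSpace A] [Nonempty A]

lemma isLeast_sInf_image_maximizers {s r : A → ℝ} (hs : Continuous s) (hr : Continuous r) :
    IsLeast (s '' maximizers r) (sInf (s '' maximizers r)) := by
  have hclosed : IsClosed (maximizers r) := by
    rw [maximizers, ofPred_forall]
    exact isClosed_iInter fun a' => isClosed_le continuous_const hr
  obtain ⟨a, -, ha⟩ := isCompact_univ.exists_isMaxOn univ_nonempty hr.continuousOn
  have hne : (maximizers r).Nonempty := ⟨a, fun a' => ha (mem_univ a')⟩
  exact (hclosed.isCompact.image hs).isLeast_sInf (hne.image s)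

/- Half of Berge's maximum theorem: a sublevel set is the projection, along the compact space `A`,
of the closed set of pairs `(a, x)` such that `a` maximizes `r x` and has a small value. -/
lemma lowerSemicontinuous_sInf_image_maximizers {s r : X → A → ℝ}
    (hs : Continuous fun z : A × X => s z.2 z.1) (hr : Continuous fun z : A × X => r z.2 z.1) :
    LowerSemicontinuous fun x => sInf (s x '' maximizers (r x)) := by
  rw [lowerSemicontinuous_iff_isClosed_preimage]
  intro c
  have hclosed : IsClosed {z : A × X | z.1 ∈ maximizers (r z.2) ∧ s z.2 z.1 ≤ c} :=
    (isClosed_setOf_mem_maximizers hr).inter (isClosed_le hs continuous_const)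
  convert isClosedMap_snd_of_compactSpace _ hclosed using 1
  ext x
  have hleast : IsLeast (s x '' maximizers (r x)) (sInf (s x '' maximizers (r x))) :=
    isLeast_sInf_image_maximizers (hs.comp (continuous_id.prodMk continuous_const))
      (hr.comp (continuous_id.prodMk continuous_const))
  constructor
  · intro hx
    obtain ⟨a, ha, hsa⟩ := hleast.1
    exact ⟨(a, x), ⟨ha, hsa.trans_le hx⟩, rfl⟩
  · rintro ⟨⟨a, y⟩, ⟨ha, hsa⟩, rfl⟩
    exact (hleast.2 (mem_image_of_mem _ ha)).trans hsa

end LexicographicOptimization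

lemma exists_linearMap_eq_le_of_sublinear {E : Type*} [AddCommGroup E] [Module ℝ E] {N : E → ℝ}
    (hsmul : ∀ c : ℝ, 0 < c → ∀ x, N (c • x) = c * N x) (hadd : ∀ x y, N (x + y) ≤ N x + N y)
    (x : E) : ∃ L : E →ₗ[ℝ] ℝ, L x = N x ∧ ∀ y, L y ≤ N y := by
  have hzero : N 0 = 0 := by
    have := hsmul 2 two_pos 0
    rw [smul_zero] at this
    linarith
  have hwd : ∀ c : ℝ, c • x = 0 → c • N x = 0 := by
    intro c hc
    rcases smul_eq_zero.1 hc with rfl | rfl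
    · exact zero_smul ℝ _
    · rw [hzero, smul_zero]
  have hle : ∀ c : ℝ, c * N x ≤ N (c • x) := by
    intro c
    rcases lt_trichotomy c 0 with hc | rfl | hc
    · have hneg : N (-c • x) = -c * N x := hsmul (-c) (neg_pos.2 hc) x
      have hsum : N 0 ≤ N (c • x) + N (-c • x) := by
        simpa only [← add_smul, add_neg_cancel, zero_smul] using hadd (c • x) (-c • x)
      linarith
    · rw [zero_smul, zero_mul, hzero]
    · exact (hsmul c hc x).ge
  let P : E →ₗ.[ℝ] ℝ := LinearPMap.mkSpanSingleton' x (N x) hwd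
  have hP : ∀ y : P.domain, P y ≤ N y := by
    rintro ⟨y, hy⟩
    obtain ⟨c, rfl⟩ := Submodule.mem_span_singleton.1 hy
    exact (LinearPMap.mkSpanSingleton'_apply x (N x) hwd c hy).trans_le (hle c)
  obtain ⟨L, hLP, hLN⟩ := exists_extension_of_le_sublinear P N hsmul hadd hP
  have hx : x ∈ P.domain := Submodule.mem_span_singleton_self x
  exact ⟨L, (hLP ⟨x, hx⟩).trans (LinearPMap.mkSpanSingleton'_apply_self x (N x) hwd hx), hLN⟩

lemma exists_isFiniteMeasure_forall_integral_eq {X : Type*} [TopologicalSpace X] [CompactSpace X]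
    [T2Space X] [MeasurableSpace X] [BorelSpace X] (L : C(X, ℝ) →ₗ[ℝ] ℝ)
    (hL : ∀ g : C(X, ℝ), 0 ≤ g → 0 ≤ L g) :
    ∃ m : Measure X, IsFiniteMeasure m ∧ ∀ g : C(X, ℝ), ∫ x, g x ∂m = L g := by
  let e : CompactlySupportedContinuousMap X ℝ →ₗ[ℝ] C(X, ℝ) :=
    { toFun := CompactlySupportedContinuousMap.continuousMapEquiv.symm
      map_add' := fun _ _ => rfl
      map_smul' := fun _ _ => rfl }
  let Λ : CompactlySupportedContinuousMap X ℝ →ₚ[ℝ] ℝ :=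
    PositiveLinearMap.mk₀ (L ∘ₗ e) fun g hg => hL (e g) hg
  exact ⟨RealRMK.rieszMeasure Λ, inferInstance, fun g => RealRMK.integral_rieszMeasure Λ
    (CompactlySupportedContinuousMap.continuousMapEquiv g)⟩

section Beliefs

variable {Θ : Type*} [MeasurableSpace Θ]

lemma measurable_toMeasure : Measurable fun μ : ProbabilityMeasure Θ => (μ : Measure Θ) :=
  comap_measurable _

lemma measurable_toMeasure_apply {B : Set Θ} (hB : MeasurableSet B) :
    Measurable fun μ : ProbabilityMeasure Θ => (μ : Measure Θ) B :=
  (Measure.measurable_coe hB).comp measurable_toMeasure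

/-- The tautological Markov kernel from beliefs to states, under which the state is drawn from the
belief itself. Integrating against it computes barycenters. -/
noncomputable def beliefKernel (Θ : Type*) [MeasurableSpace Θ] :
    Kernel (ProbabilityMeasure Θ) Θ where
  toFun μ := μ
  measurable' := measurable_toMeasure

instance : IsMarkovKernel (beliefKernel Θ) :=
  ⟨fun μ => inferInstanceAs (IsProbabilityMeasure (μ : Measure Θ))⟩

lemma mem_infoPolicies_iff_bind_eq {μ : ProbabilityMeasure Θ}
    {q : ProbabilityMeasure (ProbabilityMeasure Θ)} :
    q ∈ infoPolicies μ ↔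
      (q : Measure (ProbabilityMeasure Θ)).bind (beliefKernel Θ) = (μ : Measure Θ) := by
  rw [Measure.ext_iff]
  refine forall₂_congr fun B hB => ?_
  rw [Measure.bind_apply hB (beliefKernel Θ).aemeasurable,
    integral_toReal (measurable_toMeasure_apply hB).aemeasurable
      (ae_of_all _ fun ν => measure_lt_top _ B)]
  refine ENNReal.toReal_eq_toReal_iff' (ne_of_lt ?_) (measure_ne_top _ _)
  calc ∫⁻ ν : ProbabilityMeasure Θ, (ν : Measure Θ) B ∂(q : Measure (ProbabilityMeasure Θ))
      ≤ ∫⁻ _, 1 ∂(q : Measure (ProbabilityMeasure Θ)) := lintegral_mono fun ν => prob_le_one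
    _ < ⊤ := by simp

lemma integral_bind_beliefKernel (q : ProbabilityMeasure (ProbabilityMeasure Θ)) {h : Θ → ℝ}
    (hh : Integrable h ((q : Measure (ProbabilityMeasure Θ)).bind (beliefKernel Θ))) :
    ∫ θ, h θ ∂(q : Measure (ProbabilityMeasure Θ)).bind (beliefKernel Θ) =
      ∫ ν, ∫ θ, h θ ∂(ν : Measure Θ) ∂(q : Measure (ProbabilityMeasure Θ)) := by
  rw [Measure.comp_eq_comp_const_apply] at hh ⊢
  exact Kernel.integral_comp hh

lemma diracProba_mem_infoPolicies (μ : ProbabilityMeasure Θ) : diracProba μ ∈ infoPolicies μ :=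
  mem_infoPolicies_iff_bind_eq.2 (Measure.dirac_bind (beliefKernel Θ).measurable μ)

variable [TopologicalSpace Θ] [BorelSpace Θ]

section CompactSpace

variable [CompactSpace Θ]

lemma integrable_continuousMap (m : Measure Θ) [IsFiniteMeasure m] (g : C(Θ, ℝ)) :
    Integrable g m :=
  g.continuous.integrable_of_hasCompactSupport (HasCompactSupport.of_compactSpace g)

/-- A continuous function on `Θ`, seen as the continuous affine function on beliefs that maps a
belief to its expectation. -/
noncomputable def expectationMap (h : C(Θ, ℝ)) : C(ProbabilityMeasure Θ, ℝ) where
  toFun μ := ∫ θ, h θ ∂(μ : Measure Θ)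
  continuous_toFun := ProbabilityMeasure.continuous_integral_continuousMap h

lemma continuous_integral_prod :
    Continuous fun z : C(Θ, ℝ) × ProbabilityMeasure Θ => ∫ θ, z.1 θ ∂(z.2 : Measure Θ) := by
  refine continuous_prod_of_continuous_lipschitzWith _ 1
    (fun h => (expectationMap h).continuous)
    fun μ => LipschitzWith.of_dist_le_mul fun h h' => ?_
  have hnorm : ‖∫ θ, (h - h') θ ∂(μ : Measure Θ)‖ ≤ ‖h - h'‖ := by
    simpa only [probReal_univ, mul_one] using
      norm_integral_le_of_norm_le_const (ae_of_all (μ : Measure Θ) (h - h').norm_coe_le_norm)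
  rwa [NNReal.coe_one, one_mul, dist_eq_norm, dist_eq_norm,
    ← integral_sub (integrable_continuousMap _ h) (integrable_continuousMap _ h')]

lemma continuous_integral_of_continuous_uncurry {A : Type*} [TopologicalSpace A] {u : A → Θ → ℝ}
    (hu : Continuous fun z : A × Θ => u z.1 z.2) :
    Continuous fun z : A × ProbabilityMeasure Θ => ∫ θ, u z.1 θ ∂(z.2 : Measure Θ) :=
  continuous_integral_prod.comp
    (((ContinuousMap.mk _ hu).curry.continuous.comp continuous_fst).prodMk continuous_snd)

end CompactSpace

lemma probMeasurableSpace_le_borel [HasOuterApproxClosed Θ] :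
    (probMeasurableSpace : MeasurableSpace (ProbabilityMeasure Θ)) ≤ borel _ := by
  let _ : MeasurableSpace (ProbabilityMeasure Θ) := borel _
  have : BorelSpace (ProbabilityMeasure Θ) := ⟨rfl⟩
  refine measurable_iff_comap_le.1 <| Measurable.measure_of_isPiSystem_of_isProbabilityMeasure
    BorelSpace.measurable_eq isPiSystem_isOpen fun G hG => ?_
  have hlsc : LowerSemicontinuous fun μ : ProbabilityMeasure Θ => (μ : Measure Θ) G :=
    lowerSemicontinuous_iff_le_liminf.2 fun μ =>
      ProbabilityMeasure.le_liminf_measure_open_of_tendsto tendsto_id hG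
  exact hlsc.measurable

lemma ext_of_forall_integral_continuousMap [HasOuterApproxClosed Θ] {m m' : Measure Θ}
    [IsFiniteMeasure m] [IsFiniteMeasure m'] (h : ∀ g : C(Θ, ℝ), ∫ x, g x ∂m = ∫ x, g x ∂m') :
    m = m' :=
  ext_of_forall_integral_eq_of_IsFiniteMeasure fun g => h g.toContinuousMap

variable [CompactSpace Θ]

lemma mem_infoPolicies_iff_forall_integral_eq [HasOuterApproxClosed Θ] {μ : ProbabilityMeasure Θ}
    {q : ProbabilityMeasure (ProbabilityMeasure Θ)} :
    q ∈ infoPolicies μ ↔ ∀ h : C(Θ, ℝ),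
      ∫ ν, ∫ θ, h θ ∂(ν : Measure Θ) ∂(q : Measure (ProbabilityMeasure Θ)) =
        ∫ θ, h θ ∂(μ : Measure Θ) := by
  rw [mem_infoPolicies_iff_bind_eq]
  refine ⟨fun hq h => ?_, fun hq => ext_of_forall_integral_continuousMap fun h => ?_⟩
  · rw [← integral_bind_beliefKernel q (integrable_continuousMap _ h), hq]
  · rw [integral_bind_beliefKernel q (integrable_continuousMap _ h), hq]

variable [MetrizableSpace Θ]

/- Integration against a dense sequence of continuous functions embeds the compact space of beliefs
into `ℕ → ℝ`, and the coordinates of this embedding are Giry measurable. -/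
lemma borel_le_probMeasurableSpace :
    borel (ProbabilityMeasure Θ) ≤ probMeasurableSpace := by
  let Φ (μ : ProbabilityMeasure Θ) (n : ℕ) : ℝ := ∫ θ, denseSeq C(Θ, ℝ) n θ ∂(μ : Measure Θ)
  have hcont : Continuous Φ :=
    continuous_pi fun n => (expectationMap (denseSeq C(Θ, ℝ) n)).continuous
  have hmeas : Measurable Φ := measurable_pi_lambda _ fun n =>
    ((denseSeq C(Θ, ℝ) n).continuous.stronglyMeasurable.integral_kernel
      (κ := beliefKernel Θ)).measurable
  have hinj : Function.Injective Φ := by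
    intro μ μ' h
    have heq : (fun g : C(Θ, ℝ) => ∫ θ, g θ ∂(μ : Measure Θ)) =
        fun g => ∫ θ, g θ ∂(μ' : Measure Θ) :=
      Continuous.ext_on (denseRange_denseSeq _)
        (continuous_integral_prod.comp (Continuous.prodMk_left μ))
        (continuous_integral_prod.comp (Continuous.prodMk_left μ'))
        (forall_mem_range.2 (congrFun h))
    have hmeasure : (μ : Measure Θ) = μ' := ext_of_forall_integral_continuousMap (congrFun heq)
    exact Subtype.ext hmeasure
  rw [(hcont.isClosedEmbedding hinj).isInducing.eq_induced, borel_comap,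
    ← BorelSpace.measurable_eq (α := ℕ → ℝ)]
  exact hmeas.comap_le

instance : BorelSpace (ProbabilityMeasure Θ) :=
  ⟨le_antisymm probMeasurableSpace_le_borel borel_le_probMeasurableSpace⟩

end Beliefs

section PersuasionValue

variable {Θ : Type*} [MeasurableSpace Θ]

/-- The value at the belief `μ` of a sender who gets `w ν` at the posterior `ν` and can commit to
any information policy. Thus `wHat uS uR` is `persuasionValue (wFun uS uR)`. -/
noncomputable def persuasionValue (w : ProbabilityMeasure Θ → ℝ) (μ : ProbabilityMeasure Θ) : ℝ :=
  sSup ((fun q : ProbabilityMeasure (ProbabilityMeasure Θ) =>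
    ∫ ν, w ν ∂(q : Measure (ProbabilityMeasure Θ))) '' infoPolicies μ)

lemma abs_integral_le_of_abs_le {X : Type*} [MeasurableSpace X] (m : Measure X)
    [IsProbabilityMeasure m] {f : X → ℝ} {b : ℝ} (hf : ∀ x, |f x| ≤ b) : |∫ x, f x ∂m| ≤ b := by
  simpa only [Real.norm_eq_abs, probReal_univ, mul_one] using
    norm_integral_le_of_norm_le_const (μ := m) (f := f) (ae_of_all m hf)

variable {w : ProbabilityMeasure Θ → ℝ} {b : ℝ} {μ : ProbabilityMeasure Θ}

lemma integral_le_persuasionValue (hw : ∀ ν, |w ν| ≤ b)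
    {q : ProbabilityMeasure (ProbabilityMeasure Θ)} (hq : q ∈ infoPolicies μ) :
    ∫ ν, w ν ∂(q : Measure (ProbabilityMeasure Θ)) ≤ persuasionValue w μ :=
  le_csSup ⟨b, forall_mem_image.2 fun q' _ =>
      (abs_le.1 (abs_integral_le_of_abs_le (q' : Measure (ProbabilityMeasure Θ)) hw)).2⟩
    (mem_image_of_mem _ hq)

lemma exists_mem_infoPolicies_lt_integral {c : ℝ} (hc : c < persuasionValue w μ) :
    ∃ q ∈ infoPolicies μ, c < ∫ ν, w ν ∂(q : Measure (ProbabilityMeasure Θ)) :=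
  exists_mem_image.1 <| exists_lt_of_lt_csSup
    ((nonempty_of_mem (diracProba_mem_infoPolicies μ)).image _) hc

lemma abs_persuasionValue_le (hw : ∀ ν, |w ν| ≤ b) (μ : ProbabilityMeasure Θ) :
    |persuasionValue w μ| ≤ b := by
  have hle (q : ProbabilityMeasure (ProbabilityMeasure Θ)) :=
    abs_le.1 (abs_integral_le_of_abs_le (q : Measure (ProbabilityMeasure Θ)) hw)
  refine abs_le.2 ⟨?_, ?_⟩
  · exact (hle _).1.trans (integral_le_persuasionValue hw (diracProba_mem_infoPolicies μ))
  · exact csSup_le ((nonempty_of_mem (diracProba_mem_infoPolicies μ)).image _)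
      (forall_mem_image.2 fun q _ => (hle q).2)

end PersuasionValue

section ConcaveEnvelope

variable {Θ : Type*} [MeasurableSpace Θ] [TopologicalSpace Θ]

/-- The continuous functions on `Θ` whose integral, as an affine function of the belief, dominates
`g`. -/
def affineMajorants (g : ProbabilityMeasure Θ → ℝ) : Set C(Θ, ℝ) :=
  {h | ∀ ν : ProbabilityMeasure Θ, g ν ≤ ∫ θ, h θ ∂(ν : Measure Θ)}

/-- The upper concave envelope of `g`: the pointwise infimum of its continuous affine majorants. -/
noncomputable def concaveEnvelope (g : ProbabilityMeasure Θ → ℝ) (μ : ProbabilityMeasure Θ) : ℝ :=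
  ⨅ h : affineMajorants g, ∫ θ, (h : C(Θ, ℝ)) θ ∂(μ : Measure Θ)

variable {g : ProbabilityMeasure Θ → ℝ} {b : ℝ} {μ : ProbabilityMeasure Θ}

lemma const_mem_affineMajorants (hg : ∀ ν, g ν ≤ b) :
    ContinuousMap.const Θ b ∈ affineMajorants g := by
  intro ν
  simpa only [ContinuousMap.const_apply, integral_const, probReal_univ, one_smul] using hg ν

lemma concaveEnvelope_le_integral {h : C(Θ, ℝ)} (hh : h ∈ affineMajorants g)
    (μ : ProbabilityMeasure Θ) : concaveEnvelope g μ ≤ ∫ θ, h θ ∂(μ : Measure Θ) :=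
  ciInf_le ⟨g μ, forall_mem_range.2 fun h' : affineMajorants g => h'.2 μ⟩
    (⟨h, hh⟩ : affineMajorants g)

lemma concaveEnvelope_le (hg : ∀ ν, g ν ≤ b) (μ : ProbabilityMeasure Θ) :
    concaveEnvelope g μ ≤ b := by
  simpa only [ContinuousMap.const_apply, integral_const, probReal_univ, one_smul] using
    concaveEnvelope_le_integral (const_mem_affineMajorants hg) μ

lemma le_concaveEnvelope (hg : ∀ ν, g ν ≤ b) {c : ℝ}
    (hc : ∀ h ∈ affineMajorants g, c ≤ ∫ θ, h θ ∂(μ : Measure Θ)) : c ≤ concaveEnvelope g μ :=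
  have : Nonempty (affineMajorants g) := ⟨⟨_, const_mem_affineMajorants hg⟩⟩
  le_ciInf fun h => hc h h.2

lemma self_le_concaveEnvelope (hg : ∀ ν, g ν ≤ b) (μ : ProbabilityMeasure Θ) :
    g μ ≤ concaveEnvelope g μ :=
  le_concaveEnvelope hg fun _ hh => hh μ

lemma abs_concaveEnvelope_le (hg : ∀ ν, |g ν| ≤ b) (μ : ProbabilityMeasure Θ) :
    |concaveEnvelope g μ| ≤ b :=
  abs_le.2 ⟨(abs_le.1 (hg μ)).1.trans (self_le_concaveEnvelope (fun ν => (abs_le.1 (hg ν)).2) μ),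
    concaveEnvelope_le (fun ν => (abs_le.1 (hg ν)).2) μ⟩

lemma concaveEnvelope_smul_le (hg : ∀ ν, g ν ≤ b) {c : ℝ} (hc : 0 < c) (μ : ProbabilityMeasure Θ) :
    concaveEnvelope (c • g) μ ≤ c * concaveEnvelope g μ := by
  rw [← inv_mul_le_iff₀ hc]
  refine le_concaveEnvelope hg fun h hh => (inv_mul_le_iff₀ hc).2 ?_
  have hch : c • h ∈ affineMajorants (c • g) := fun ν =>
    (mul_le_mul_of_nonneg_left (hh ν) hc.le).trans_eq (integral_const_mul c h).symm
  exact (concaveEnvelope_le_integral hch μ).trans_eq (integral_const_mul c h)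

lemma concaveEnvelope_smul (hg : ∀ ν, g ν ≤ b) {c : ℝ} (hc : 0 < c) (μ : ProbabilityMeasure Θ) :
    concaveEnvelope (c • g) μ = c * concaveEnvelope g μ := by
  refine le_antisymm (concaveEnvelope_smul_le hg hc μ) ?_
  have hcg : ∀ ν, (c • g) ν ≤ c * b := fun ν => mul_le_mul_of_nonneg_left (hg ν) hc.le
  have hinv := concaveEnvelope_smul_le hcg (inv_pos.2 hc) μ
  rwa [inv_smul_smul₀ hc.ne', le_inv_mul_iff₀ hc] at hinv

variable [BorelSpace Θ] [CompactSpace Θ]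

lemma concaveEnvelope_add_le {g' : ProbabilityMeasure Θ → ℝ} {b' : ℝ}
    (hg : ∀ ν, g ν ≤ b) (hg' : ∀ ν, g' ν ≤ b') (μ : ProbabilityMeasure Θ) :
    concaveEnvelope (g + g') μ ≤ concaveEnvelope g μ + concaveEnvelope g' μ := by
  rw [← sub_le_iff_le_add']
  refine le_concaveEnvelope hg' fun h' hh' => ?_
  rw [sub_le_comm]
  refine le_concaveEnvelope hg fun h hh => ?_
  have hadd (ν : ProbabilityMeasure Θ) : ∫ θ, (h + h') θ ∂(ν : Measure Θ) =
      ∫ θ, h θ ∂(ν : Measure Θ) + ∫ θ, h' θ ∂(ν : Measure Θ) :=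
    integral_add (integrable_continuousMap _ h) (integrable_continuousMap _ h')
  rw [sub_le_iff_le_add, ← hadd]
  exact concaveEnvelope_le_integral
    (fun ν => (add_le_add (hh ν) (hh' ν)).trans_eq (hadd ν).symm) μ

variable [MetrizableSpace Θ]

lemma measurable_concaveEnvelope (g : ProbabilityMeasure Θ → ℝ) : Measurable (concaveEnvelope g) :=
  (upperSemicontinuous_ciInf
    (fun μ => ⟨g μ, forall_mem_range.2 fun h : affineMajorants g => h.2 μ⟩)
    fun h => (expectationMap (h : C(Θ, ℝ))).continuous.upperSemicontinuous).measurable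

lemma integral_le_integral_of_mem_affineMajorants {q : ProbabilityMeasure (ProbabilityMeasure Θ)}
    (hq : q ∈ infoPolicies μ) (hg : Integrable g (q : Measure (ProbabilityMeasure Θ)))
    {h : C(Θ, ℝ)} (hh : h ∈ affineMajorants g) :
    ∫ ν, g ν ∂(q : Measure (ProbabilityMeasure Θ)) ≤ ∫ θ, h θ ∂(μ : Measure Θ) := by
  rw [← mem_infoPolicies_iff_forall_integral_eq.1 hq h]
  exact integral_mono hg (integrable_continuousMap _ (expectationMap h)) hh

lemma integral_concaveEnvelope_le (hg : ∀ ν, |g ν| ≤ b)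
    {p : ProbabilityMeasure (ProbabilityMeasure Θ)} (hp : p ∈ infoPolicies μ) :
    ∫ ν, concaveEnvelope g ν ∂(p : Measure (ProbabilityMeasure Θ)) ≤ concaveEnvelope g μ :=
  have hinteg : Integrable (concaveEnvelope g) (p : Measure (ProbabilityMeasure Θ)) :=
    Integrable.of_bound (measurable_concaveEnvelope g).aestronglyMeasurable b
      (ae_of_all _ (abs_concaveEnvelope_le hg))
  le_concaveEnvelope (fun ν => (abs_le.1 (hg ν)).2) fun _ hh =>
    integral_le_integral_of_mem_affineMajorants hp hinteg (concaveEnvelope_le_integral hh)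

lemma integral_le_concaveEnvelope (hg : ∀ ν, g ν ≤ b)
    {q : ProbabilityMeasure (ProbabilityMeasure Θ)} (hq : q ∈ infoPolicies μ)
    (hgi : Integrable g (q : Measure (ProbabilityMeasure Θ))) :
    ∫ ν, g ν ∂(q : Measure (ProbabilityMeasure Θ)) ≤ concaveEnvelope g μ :=
  le_concaveEnvelope hg fun _ hh => integral_le_integral_of_mem_affineMajorants hq hgi hh

/- Hahn–Banach yields a linear functional on `C(ProbabilityMeasure Θ, ℝ)` that lies below the
sublinear functional `concaveEnvelope · μ` and touches it at `g`; the measure representing it by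
Riesz–Markov–Kakutani is the policy. -/
lemma exists_mem_infoPolicies_integral_eq_concaveEnvelope (g : C(ProbabilityMeasure Θ, ℝ))
    (μ : ProbabilityMeasure Θ) :
    ∃ q ∈ infoPolicies μ,
      ∫ ν, g ν ∂(q : Measure (ProbabilityMeasure Θ)) = concaveEnvelope g μ := by
  have hnorm (g' : C(ProbabilityMeasure Θ, ℝ)) (ν) : g' ν ≤ ‖g'‖ := g'.apply_le_norm ν
  obtain ⟨L, hLg, hL⟩ := exists_linearMap_eq_le_of_sublinear
    (N := fun g' : C(ProbabilityMeasure Θ, ℝ) => concaveEnvelope g' μ)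
    (fun c hc g' => concaveEnvelope_smul (hnorm g') hc μ)
    (fun g' g'' => concaveEnvelope_add_le (hnorm g') (hnorm g'') μ) g
  have hLpos (g' : C(ProbabilityMeasure Θ, ℝ)) (hg' : 0 ≤ g') : 0 ≤ L g' := by
    have hneg : L (-g') ≤ 0 :=
      (hL (-g')).trans (concaveEnvelope_le (fun ν => neg_nonpos.2 (hg' ν)) μ)
    rwa [map_neg, neg_nonpos] at hneg
  have hLle (h : C(Θ, ℝ)) : L (expectationMap h) ≤ ∫ θ, h θ ∂(μ : Measure Θ) :=
    (hL _).trans (concaveEnvelope_le_integral (fun _ => le_rfl) μ)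
  have hLexp (h : C(Θ, ℝ)) : L (expectationMap h) = ∫ θ, h θ ∂(μ : Measure Θ) := by
    refine le_antisymm (hLle h) ?_
    have hneg : expectationMap (-h) = -expectationMap h :=
      ContinuousMap.ext fun ν => integral_neg h
    have hle := hLle (-h)
    simp only [hneg, map_neg, ContinuousMap.neg_apply, integral_neg] at hle
    exact neg_le_neg_iff.1 hle
  obtain ⟨m, _, hmL⟩ := exists_isFiniteMeasure_forall_integral_eq L hLpos
  have hmass : m.real univ = 1 := by
    simpa [expectationMap] using (hmL (expectationMap 1)).trans (hLexp 1)
  have hprob : IsProbabilityMeasure m := ⟨(ENNReal.toReal_eq_one_iff _).1 hmass⟩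
  exact ⟨⟨m, hprob⟩, mem_infoPolicies_iff_forall_integral_eq.2 fun h =>
    (hmL (expectationMap h)).trans (hLexp h), (hmL g).trans hLg⟩

end ConcaveEnvelope

section Mixture

/-- The probability measure `ν` is the convex combination `tμ + (1 - t)ρ`. For `t` outside `[0, 1]`
the truncation in `ENNReal.ofReal` deprives this of its meaning. -/
def IsMixture {Ω : Type*} [MeasurableSpace Ω] (t : ℝ) (μ ρ ν : ProbabilityMeasure Ω) : Prop :=
  (ν : Measure Ω) = ENNReal.ofReal t • (μ : Measure Ω) + ENNReal.ofReal (1 - t) • (ρ : Measure Ω)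

variable {Ω : Type*} [MeasurableSpace Ω] {t : ℝ} {μ ρ ν : ProbabilityMeasure Ω}

lemma exists_isMixture (ht0 : 0 ≤ t) (ht1 : t ≤ 1) (μ ρ : ProbabilityMeasure Ω) :
    ∃ ν, IsMixture t μ ρ ν := by
  refine ⟨⟨_, ⟨?_⟩⟩, rfl⟩
  simp only [Measure.coe_add, Measure.coe_smul, Pi.add_apply, Pi.smul_apply, measure_univ,
    smul_eq_mul, mul_one]
  rw [← ENNReal.ofReal_add ht0 (sub_nonneg.2 ht1), add_sub_cancel, ENNReal.ofReal_one]

lemma IsMixture.real_apply (hν : IsMixture t μ ρ ν) (ht0 : 0 ≤ t) (ht1 : t ≤ 1) (E : Set Ω) :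
    (ν : Measure Ω).real E = t * (μ : Measure Ω).real E + (1 - t) * (ρ : Measure Ω).real E := by
  rw [hν, measureReal_add_apply (by simp [ENNReal.mul_ne_top]) (by simp [ENNReal.mul_ne_top]),
    measureReal_ennreal_smul_apply, measureReal_ennreal_smul_apply,
    ENNReal.toReal_ofReal ht0, ENNReal.toReal_ofReal (sub_nonneg.2 ht1)]

lemma IsMixture.integral_eq (hν : IsMixture t μ ρ ν) (ht0 : 0 ≤ t) (ht1 : t ≤ 1) {f : Ω → ℝ}
    (hμ : Integrable f (μ : Measure Ω)) (hρ : Integrable f (ρ : Measure Ω)) :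
    ∫ x, f x ∂(ν : Measure Ω) =
      t * ∫ x, f x ∂(μ : Measure Ω) + (1 - t) * ∫ x, f x ∂(ρ : Measure Ω) := by
  rw [hν, integral_add_measure (hμ.smul_measure ENNReal.ofReal_ne_top)
      (hρ.smul_measure ENNReal.ofReal_ne_top), integral_smul_measure, integral_smul_measure,
    ENNReal.toReal_ofReal ht0, ENNReal.toReal_ofReal (sub_nonneg.2 ht1), smul_eq_mul, smul_eq_mul]

lemma scaledLE_iff_real (ht0 : 0 ≤ t) :
    scaledLE t μ ν ↔
      ∀ E, MeasurableSet E → t * (μ : Measure Ω).real E ≤ (ν : Measure Ω).real E := by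
  refine forall₂_congr fun E _ => ?_
  rw [measureReal_def, measureReal_def, ← ENNReal.toReal_ofReal ht0, ← ENNReal.toReal_mul,
    ENNReal.toReal_le_toReal (by finiteness) (by finiteness), ENNReal.toReal_ofReal ht0]

lemma exists_isMixture_of_scaledLE (ht0 : 0 ≤ t) (ht1 : t < 1) (h : scaledLE t μ ν) :
    ∃ ρ, IsMixture t μ ρ ν := by
  have : IsFiniteMeasure (ENNReal.ofReal t • (μ : Measure Ω)) :=
    Measure.smul_finite _ ENNReal.ofReal_ne_top
  let σ : Measure Ω := ν - ENNReal.ofReal t • (μ : Measure Ω)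
  have hσ : σ + ENNReal.ofReal t • (μ : Measure Ω) = ν :=
    Measure.sub_add_cancel_of_le (Measure.le_iff.2 h)
  have hσuniv : σ univ = ENNReal.ofReal (1 - t) := by
    have huniv : σ univ + ENNReal.ofReal t = 1 := by
      simpa using congrArg (fun m : Measure Ω => m univ) hσ
    rw [ENNReal.ofReal_sub 1 ht0, ENNReal.ofReal_one]
    exact ENNReal.eq_sub_of_add_eq ENNReal.ofReal_ne_top huniv
  have hpos : ENNReal.ofReal (1 - t) ≠ 0 := (ENNReal.ofReal_pos.2 (sub_pos.2 ht1)).ne'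
  refine ⟨⟨(ENNReal.ofReal (1 - t))⁻¹ • σ, ⟨?_⟩⟩, ?_⟩
  · rw [Measure.smul_apply, hσuniv, smul_eq_mul, ENNReal.inv_mul_cancel hpos ENNReal.ofReal_ne_top]
  · unfold IsMixture
    rw [← hσ, add_comm, ProbabilityMeasure.coe_mk, smul_smul,
      ENNReal.mul_inv_cancel hpos ENNReal.ofReal_ne_top, one_smul]

lemma IsMixture.scaledLE_of_scaledLE {μbar : ProbabilityMeasure Ω} {γ lam : ℝ} (hγ : 0 < γ)
    (h : scaledLE γ μ μbar) (hlam0 : 0 ≤ lam) (hlam1 : lam ≤ 1) (hlamγ : lam ≤ γ)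
    (hν : IsMixture lam μ μbar ν) : scaledLE (1 - lam / γ) ν μbar := by
  have hs : 0 ≤ 1 - lam / γ := sub_nonneg.2 ((div_le_one hγ).2 hlamγ)
  refine (scaledLE_iff_real hs).2 fun E hE => ?_
  have hμ : lam * (μ : Measure Ω).real E ≤ lam / γ * (μbar : Measure Ω).real E := by
    rw [div_mul_eq_mul_div, mul_div_assoc]
    exact mul_le_mul_of_nonneg_left
      ((le_div_iff₀' hγ).2 ((scaledLE_iff_real hγ.le).1 h E hE)) hlam0
  rw [hν.real_apply hlam0 hlam1]
  calc (1 - lam / γ) * (lam * (μ : Measure Ω).real E + (1 - lam) * (μbar : Measure Ω).real E)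
      ≤ (1 - lam / γ) *
          (lam / γ * (μbar : Measure Ω).real E + (1 - lam) * (μbar : Measure Ω).real E) := by
        gcongr
    _ = (1 - (lam / γ) ^ 2 - lam * (1 - lam / γ)) * (μbar : Measure Ω).real E := by ring
    _ ≤ 1 * (μbar : Measure Ω).real E := by
        gcongr
        nlinarith [sq_nonneg (lam / γ), mul_nonneg hlam0 hs]
    _ = (μbar : Measure Ω).real E := one_mul _

end Mixture

section Jensen

variable {Θ : Type*} [MeasurableSpace Θ] [TopologicalSpace Θ] [BorelSpace Θ] [CompactSpace Θ]
  [MetrizableSpace Θ] {w : ProbabilityMeasure Θ → ℝ} {b : ℝ}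

lemma tendsto_concaveEnvelope_persuasionValue (hw : ∀ ν, |w ν| ≤ b)
    {g : ℕ → C(ProbabilityMeasure Θ, ℝ)} (hgb : ∀ k ν, |g k ν| ≤ b) (hgw : ∀ k ν, g k ν ≤ w ν)
    (hg : ∀ ν, Tendsto (fun k => g k ν) atTop (𝓝 (w ν))) (μ : ProbabilityMeasure Θ) :
    Tendsto (fun k => concaveEnvelope (g k) μ) atTop (𝓝 (persuasionValue w μ)) := by
  have hwi (q : ProbabilityMeasure (ProbabilityMeasure Θ)) :
      Integrable w (q : Measure (ProbabilityMeasure Θ)) :=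
    Integrable.of_bound (measurable_of_tendsto_metrizable (fun k => (g k).continuous.measurable)
      (tendsto_pi_nhds.2 hg)).aestronglyMeasurable b (ae_of_all _ hw)
  refine tendsto_order.2 ⟨fun c hc => ?_, fun c hc => Eventually.of_forall fun k => ?_⟩
  · obtain ⟨q, hq, hcq⟩ := exists_mem_infoPolicies_lt_integral hc
    have hlim : Tendsto (fun k => ∫ ν, g k ν ∂(q : Measure (ProbabilityMeasure Θ))) atTop
        (𝓝 (∫ ν, w ν ∂(q : Measure (ProbabilityMeasure Θ)))) :=
      tendsto_integral_of_dominated_convergence (fun _ => b)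
        (fun k => (g k).continuous.aestronglyMeasurable) (integrable_const b)
        (fun k => ae_of_all _ (hgb k)) (ae_of_all _ hg)
    filter_upwards [hlim.eventually_const_lt hcq] with k hk
    exact hk.trans_le (integral_le_concaveEnvelope (fun ν => (abs_le.1 (hgb k ν)).2) hq
      (integrable_continuousMap _ (g k)))
  · obtain ⟨q, hq, hqk⟩ := exists_mem_infoPolicies_integral_eq_concaveEnvelope (g k) μ
    calc concaveEnvelope (g k) μ = ∫ ν, g k ν ∂(q : Measure (ProbabilityMeasure Θ)) := hqk.symm
      _ ≤ ∫ ν, w ν ∂(q : Measure (ProbabilityMeasure Θ)) :=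
        integral_mono (integrable_continuousMap _ (g k)) (hwi q) (hgw k)
      _ ≤ persuasionValue w μ := integral_le_persuasionValue hw hq
      _ < c := hc

lemma exists_tendsto_concaveEnvelope_persuasionValue (hlsc : LowerSemicontinuous w)
    (hw : ∀ ν, |w ν| ≤ b) :
    ∃ g : ℕ → C(ProbabilityMeasure Θ, ℝ), (∀ k ν, |g k ν| ≤ b) ∧
      ∀ μ, Tendsto (fun k => concaveEnvelope (g k) μ) atTop (𝓝 (persuasionValue w μ)) := by
  obtain ⟨g, hgw, hg⟩ :=
    exists_continuousMap_tendsto_of_lowerSemicontinuous hlsc fun ν => (abs_le.1 (hw ν)).1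
  have hgb (k ν) : |g k ν| ≤ b :=
    abs_le.2 ⟨(hgw k ν).1, (hgw k ν).2.trans (abs_le.1 (hw ν)).2⟩
  exact ⟨g, hgb, tendsto_concaveEnvelope_persuasionValue hw hgb (fun k ν => (hgw k ν).2) hg⟩

lemma measurable_persuasionValue (hlsc : LowerSemicontinuous w) (hw : ∀ ν, |w ν| ≤ b) :
    Measurable (persuasionValue w) := by
  obtain ⟨g, -, hg⟩ := exists_tendsto_concaveEnvelope_persuasionValue hlsc hw
  exact measurable_of_tendsto_metrizable (fun k => measurable_concaveEnvelope (g k))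
    (tendsto_pi_nhds.2 hg)

lemma integrable_persuasionValue (hlsc : LowerSemicontinuous w) (hw : ∀ ν, |w ν| ≤ b)
    (p : ProbabilityMeasure (ProbabilityMeasure Θ)) :
    Integrable (persuasionValue w) (p : Measure (ProbabilityMeasure Θ)) :=
  Integrable.of_bound (measurable_persuasionValue hlsc hw).aestronglyMeasurable b
    (ae_of_all _ (abs_persuasionValue_le hw))

theorem integral_persuasionValue_le (hlsc : LowerSemicontinuous w) (hw : ∀ ν, |w ν| ≤ b)
    {μ : ProbabilityMeasure Θ} {p : ProbabilityMeasure (ProbabilityMeasure Θ)}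
    (hp : p ∈ infoPolicies μ) :
    ∫ ν, persuasionValue w ν ∂(p : Measure (ProbabilityMeasure Θ)) ≤ persuasionValue w μ := by
  obtain ⟨g, hgb, hg⟩ := exists_tendsto_concaveEnvelope_persuasionValue hlsc hw
  have hlim : Tendsto (fun k => ∫ ν, concaveEnvelope (g k) ν ∂(p : Measure (ProbabilityMeasure Θ)))
      atTop (𝓝 (∫ ν, persuasionValue w ν ∂(p : Measure (ProbabilityMeasure Θ)))) :=
    tendsto_integral_of_dominated_convergence (fun _ => b)
      (fun k => (measurable_concaveEnvelope (g k)).aestronglyMeasurable) (integrable_const b)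
      (fun k => ae_of_all _ (abs_concaveEnvelope_le (hgb k))) (ae_of_all _ hg)
  exact le_of_tendsto_of_tendsto' hlim (hg μ) fun k => integral_concaveEnvelope_le (hgb k) hp

end Jensen

section LocalPerturbation

variable {Θ : Type*} [MeasurableSpace Θ] {w : ProbabilityMeasure Θ → ℝ} {b : ℝ}

lemma IsMixture.mem_infoPolicies {t : ℝ} (ht0 : 0 ≤ t) (ht1 : t ≤ 1)
    {μ ρ ν : ProbabilityMeasure Θ} (hν : IsMixture t μ ρ ν)
    {q r s : ProbabilityMeasure (ProbabilityMeasure Θ)} (hs : IsMixture t q r s)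
    (hq : q ∈ infoPolicies μ) (hr : r ∈ infoPolicies ρ) : s ∈ infoPolicies ν := by
  intro B hB
  have hinteg (q' : ProbabilityMeasure (ProbabilityMeasure Θ)) :
      Integrable (fun ν : ProbabilityMeasure Θ => ((ν : Measure Θ) B).toReal)
        (q' : Measure (ProbabilityMeasure Θ)) :=
    Integrable.of_bound (measurable_toMeasure_apply hB).ennreal_toReal.aestronglyMeasurable 1
      (ae_of_all _ fun ν =>
        (Real.norm_of_nonneg ENNReal.toReal_nonneg).trans_le measureReal_le_one)
  rw [hs.integral_eq ht0 ht1 (hinteg q) (hinteg r), hq B hB, hr B hB]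
  exact (hν.real_apply ht0 ht1 B).symm

lemma IsMixture.le_persuasionValue (hwm : Measurable w) (hw : ∀ ν, |w ν| ≤ b) {t : ℝ}
    (ht0 : 0 ≤ t) (ht1 : t ≤ 1) {μ ρ ν : ProbabilityMeasure Θ} (hν : IsMixture t μ ρ ν) :
    t * persuasionValue w μ + (1 - t) * persuasionValue w ρ ≤ persuasionValue w ν := by
  have hwi (q : ProbabilityMeasure (ProbabilityMeasure Θ)) :
      Integrable w (q : Measure (ProbabilityMeasure Θ)) :=
    Integrable.of_bound hwm.aestronglyMeasurable b (ae_of_all _ hw)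
  refine le_of_forall_pos_le_add fun ε hε => ?_
  obtain ⟨q, hq, hqε⟩ := exists_mem_infoPolicies_lt_integral (sub_lt_self (persuasionValue w μ) hε)
  obtain ⟨r, hr, hrε⟩ := exists_mem_infoPolicies_lt_integral (sub_lt_self (persuasionValue w ρ) hε)
  obtain ⟨s, hs⟩ := exists_isMixture ht0 ht1 q r
  have hsν := integral_le_persuasionValue hw (hν.mem_infoPolicies ht0 ht1 hs hq hr)
  rw [hs.integral_eq ht0 ht1 (hwi q) (hwi r)] at hsν
  calc t * persuasionValue w μ + (1 - t) * persuasionValue w ρ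
      = t * (persuasionValue w μ - ε) + (1 - t) * (persuasionValue w ρ - ε) + ε := by ring
    _ ≤ t * ∫ ν, w ν ∂(q : Measure (ProbabilityMeasure Θ)) +
          (1 - t) * ∫ ν, w ν ∂(r : Measure (ProbabilityMeasure Θ)) + ε := by gcongr
    _ ≤ persuasionValue w ν + ε := by gcongr

lemma le_persuasionValue_of_scaledLE (hwm : Measurable w) (hw : ∀ ν, |w ν| ≤ b) {t : ℝ}
    (ht0 : 0 ≤ t) (ht1 : t < 1) {μ ν : ProbabilityMeasure Θ} (h : scaledLE t μ ν) :
    t * persuasionValue w μ - (1 - t) * b ≤ persuasionValue w ν := by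
  obtain ⟨ρ, hρ⟩ := exists_isMixture_of_scaledLE ht0 ht1 h
  calc t * persuasionValue w μ - (1 - t) * b
      = t * persuasionValue w μ + (1 - t) * -b := by ring
    _ ≤ t * persuasionValue w μ + (1 - t) * persuasionValue w ρ := by
        gcongr
        exact (abs_le.1 (abs_persuasionValue_le hw ρ)).1
    _ ≤ persuasionValue w ν := hρ.le_persuasionValue hwm hw ht0 ht1.le

lemma le_persuasionValue_of_frequently_isMixture (hwm : Measurable w) (hw : ∀ ν, |w ν| ≤ b)
    {μ μbar : ProbabilityMeasure Θ} {γ : ℝ} (hγ : 0 < γ) (hle : scaledLE γ μ μbar) {c : ℝ}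
    (h : ∃ᶠ lam in 𝓝[>] (0 : ℝ), ∀ ν, IsMixture lam μ μbar ν → c ≤ persuasionValue w ν) :
    c ≤ persuasionValue w μbar := by
  have hlim : Tendsto (fun lam => (1 - lam / γ) * c - (1 - (1 - lam / γ)) * b) (𝓝[>] 0) (𝓝 c) := by
    have hcont : Continuous fun lam => (1 - lam / γ) * c - (1 - (1 - lam / γ)) * b := by fun_prop
    simpa using (hcont.tendsto 0).mono_left nhdsWithin_le_nhds
  refine le_of_tendsto_of_frequently hlim ?_
  refine (h.and_eventually (Ioo_mem_nhdsGT (lt_min hγ one_pos))).mono ?_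
  rintro lam ⟨hc, hlam0, hlam⟩
  obtain ⟨hlamγ, hlam1⟩ := lt_min_iff.1 hlam
  have ht0 : 0 ≤ 1 - lam / γ := sub_nonneg.2 ((div_le_one hγ).2 hlamγ.le)
  have ht1 : 1 - lam / γ < 1 := sub_lt_self 1 (div_pos hlam0 hγ)
  obtain ⟨ν, hν⟩ := exists_isMixture hlam0.le hlam1.le μ μbar
  exact (sub_le_sub_right (mul_le_mul_of_nonneg_left (hc ν hν) ht0) _).trans
    (le_persuasionValue_of_scaledLE hwm hw ht0 ht1
      (hν.scaledLE_of_scaledLE hγ hle hlam0.le hlam1.le hlamγ.le))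

end LocalPerturbation

section LowerValue

variable {A Θ : Type*} [TopologicalSpace A] [CompactSpace A] [Nonempty A] [TopologicalSpace Θ]
  [CompactSpace Θ] [MeasurableSpace Θ] [BorelSpace Θ] {uS uR : A → Θ → ℝ}

lemma lowerSemicontinuous_wFun (hS : Continuous fun z : A × Θ => uS z.1 z.2)
    (hR : Continuous fun z : A × Θ => uR z.1 z.2) : LowerSemicontinuous (wFun uS uR) :=
  lowerSemicontinuous_sInf_image_maximizers (continuous_integral_of_continuous_uncurry hS)
    (continuous_integral_of_continuous_uncurry hR)

lemma wFun_mem_image_bestResponses (hS : Continuous fun z : A × Θ => uS z.1 z.2)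
    (hR : Continuous fun z : A × Θ => uR z.1 z.2) (μ : ProbabilityMeasure Θ) :
    wFun uS uR μ ∈ senderEU uS μ '' bestResponses uR μ :=
  (isLeast_sInf_image_maximizers
    ((continuous_integral_of_continuous_uncurry hS).comp (Continuous.prodMk_left μ))
    ((continuous_integral_of_continuous_uncurry hR).comp (Continuous.prodMk_left μ))).1

lemma exists_forall_abs_wFun_le (hS : Continuous fun z : A × Θ => uS z.1 z.2)
    (hR : Continuous fun z : A × Θ => uR z.1 z.2) : ∃ b, ∀ μ, |wFun uS uR μ| ≤ b := by
  obtain ⟨b, hb⟩ := isCompact_univ.exists_bound_of_continuousOn hS.continuousOn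
  refine ⟨b, fun μ => ?_⟩
  obtain ⟨a, -, ha⟩ := wFun_mem_image_bestResponses hS hR μ
  rw [← ha]
  exact abs_integral_le_of_abs_le (μ : Measure Θ) fun θ => hb (a, θ) (mem_univ _)

end LowerValue

theorem wHat_ge_integral_of_local_perturbation_general {A Θ : Type*} [TopologicalSpace A]
    [CompactSpace A] [Nonempty A] [TopologicalSpace Θ] [CompactSpace Θ] [MetrizableSpace Θ]
    [MeasurableSpace Θ] [BorelSpace Θ] {uS uR : A → Θ → ℝ}
    (hS : Continuous fun z : A × Θ => uS z.1 z.2) (hR : Continuous fun z : A × Θ => uR z.1 z.2)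
    {μ0 : ProbabilityMeasure Θ} {p : ProbabilityMeasure (ProbabilityMeasure Θ)}
    (hp : p ∈ infoPolicies μ0) {f : ProbabilityMeasure Θ → ℝ}
    (hf : Integrable f (p : Measure (ProbabilityMeasure Θ)))
    (h : ∀ᵐ μbar ∂(p : Measure (ProbabilityMeasure Θ)),
      ∃ (μ : ProbabilityMeasure Θ) (γ : ℝ), 0 < γ ∧ scaledLE γ μ μbar ∧
        ∃ᶠ lam in 𝓝[>] (0 : ℝ), ∀ ν, IsMixture lam μ μbar ν → f μbar ≤ wHat uS uR ν) :
    ∫ ν, f ν ∂(p : Measure (ProbabilityMeasure Θ)) ≤ wHat uS uR μ0 := by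
  obtain ⟨b, hb⟩ := exists_forall_abs_wFun_le hS hR
  have hlsc : LowerSemicontinuous (wFun uS uR) := lowerSemicontinuous_wFun hS hR
  have hle : ∀ᵐ μbar ∂(p : Measure (ProbabilityMeasure Θ)),
      f μbar ≤ persuasionValue (wFun uS uR) μbar := by
    filter_upwards [h] with μbar ⟨μ, γ, hγ, hscaled, hfreq⟩
    exact le_persuasionValue_of_frequently_isMixture hlsc.measurable hb hγ hscaled hfreq
  calc ∫ ν, f ν ∂(p : Measure (ProbabilityMeasure Θ))
      ≤ ∫ ν, persuasionValue (wFun uS uR) ν ∂(p : Measure (ProbabilityMeasure Θ)) :=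
        integral_mono_ae hf (integrable_persuasionValue hlsc hb p) hle
    _ ≤ wHat uS uR μ0 := integral_persuasionValue_le hlsc hb hp

/-- If `p ∈ I(μ0)` is supported on a Borel set `D`, `f` is bounded measurable, and each
`mubar ∈ D` admits `μ` and `γ > 0` with `γμ ≤ mubar` such that
`ŵ(λμ + (1−λ)mubar) ≥ f(mubar)` for all sufficiently small `λ ∈ (0,1]`,
then `ŵ(μ0) ≥ ∫ f dp`. -/
theorem wHat_ge_integral_of_local_perturbation
    {A Θ : Type*}
    [TopologicalSpace A] [CompactSpace A] [TopologicalSpace.MetrizableSpace A] [Nonempty A]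
    [MeasurableSpace A] [BorelSpace A]
    [TopologicalSpace Θ] [CompactSpace Θ] [TopologicalSpace.MetrizableSpace Θ] [Nonempty Θ]
    [MeasurableSpace Θ] [BorelSpace Θ]
    (uS uR : A → Θ → ℝ)
    (hS : Continuous fun p : A × Θ => uS p.1 p.2)
    (hR : Continuous fun p : A × Θ => uR p.1 p.2)
    (μ0 : ProbabilityMeasure Θ)
    (D : Set (ProbabilityMeasure Θ)) (hDm : MeasurableSet D)
    (p : ProbabilityMeasure (ProbabilityMeasure Θ)) (hp : p ∈ infoPolicies μ0)
    (hpD : (p : Measure (ProbabilityMeasure Θ)) D = 1)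
    (f : ProbabilityMeasure Θ → ℝ) (hfm : Measurable f) (hfb : ∃ C : ℝ, ∀ μ, |f μ| ≤ C)
    (h : ∀ mubar ∈ D, ∃ (μ : ProbabilityMeasure Θ) (γ : ℝ), 0 < γ ∧ scaledLE γ μ mubar ∧
      ∃ lam0 : ℝ, 0 < lam0 ∧ lam0 ≤ 1 ∧ ∀ lam : ℝ, 0 < lam → lam ≤ lam0 →
        ∀ ν : ProbabilityMeasure Θ,
          (ν : Measure Θ) = ENNReal.ofReal lam • (μ : Measure Θ) +
            ENNReal.ofReal (1 - lam) • (mubar : Measure Θ) →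
          f mubar ≤ wHat uS uR ν) :
    ∫ ν, f ν ∂(p : Measure (ProbabilityMeasure Θ)) ≤ wHat uS uR μ0 := by
  obtain ⟨C, hC⟩ := hfb
  have hf : Integrable f (p : Measure (ProbabilityMeasure Θ)) :=
    Integrable.of_bound hfm.aestronglyMeasurable C (ae_of_all _ hC)
  refine wHat_ge_integral_of_local_perturbation_general hS hR hp hf ?_
  filter_upwards [(mem_ae_iff_prob_eq_one hDm).2 hpD] with mubar hmubar
  obtain ⟨μ, γ, hγ, hscaled, lam0, hlam0, -, hlam⟩ := h mubar hmubar
  refine ⟨μ, γ, hγ, hscaled, Eventually.frequently ?_⟩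
  filter_upwards [Ioc_mem_nhdsGT hlam0] with lam ⟨hpos, hle⟩ using hlam lam hpos hle
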